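/- Let H be a real Hilbert space, d ≥ 1 an integer, C ⊆ H a nonempty closed convex set with ‖x − y‖ ≤ d for all x, y ∈ C, T : C → C nonexpansive with Fix(T) ≠ ∅, and G : C → C a τ-contraction (0 ≤ τ < 1). Let ε ∈ (0,1], t ∈ [0,1], Δ : C × (C → (0,1]) → (0,1], V : C × (C → (0,1]) → C, and let f : ℕ⁺ → ℕ⁺ majorize Δ, i.e. for every k ∈ ℕ⁺ and every φ' : C → (0,1] with 1/k ≤ φ'(v) for all v ∈ C one has 1/f(k) ≤ Δ(v, φ') for all v ∈ C. Then there exist u ∈ C and φ : C → (0,1] such that: (a) ‖u − T(u)‖ < Δ(u, φ); (b) if ‖T(V(u,φ)) − V(u,φ)‖ < φ(V(u,φ)) then ‖G(u) − u‖² < ‖G(u) − ((1−t)·u + t·V(u,φ))‖² + ε; and (c) 1/K ≤ φ(v) for all v ∈ C, where K := k_{i₀} is defined by: ε̃ := ((1−τ)²/(6+8d))·ε, n_ε̃ := ⌈8d⁴/ε̃⁴⌉, i₀ := the least integer i ≥ 0 with τ^{i+1} ≤ ε̃/(6d²), f̃(n) := max{f^M(16d·n²), 16d·n²} where f^M(n)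 := max{f(i) : 1 ≤ i ≤ n}, f_i(k) := f̃^{(n_ε̃^i)}(k) (the n_ε̃^i-fold iterate of f̃), f̃_i(n) := max{f_i^M(16d·n²), 16d·n²}, k₀ := f̃₀^{(n_ε̃)}(1) and k_{i+1} := f̃_i^{(n_ε̃)}(k_i). -/

import Mathlib

open scoped RealInnerProductSpace

/-- `fM f n = max {f i : 1 ≤ i ≤ n}`. -/
def fM (f : ℕ → ℕ) (n : ℕ) : ℕ := (Finset.Icc 1 n).sup f

/-- `ftilde d f n = max {fᴹ(16·d·n²), 16·d·n²}`. -/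
def ftilde (d : ℕ) (f : ℕ → ℕ) (n : ℕ) : ℕ := max (fM f (16 * d * n ^ 2)) (16 * d * n ^ 2)

/-- `fIt d nε f i = f̃^(nε^i)`, the `nε^i`-fold iterate of `f̃`. -/
def fIt (d nε : ℕ) (f : ℕ → ℕ) (i : ℕ) (k : ℕ) : ℕ := (ftilde d f)^[nε ^ i] k

/-- `ftildeI d nε f i n = max {fᵢᴹ(16·d·n²), 16·d·n²}`. -/
def ftildeI (d nε : ℕ) (f : ℕ → ℕ) (i : ℕ) (n : ℕ) : ℕ :=
  max (fM (fIt d nε f i) (16 * d * n ^ 2)) (16 * d * n ^ 2)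

/-- The recursively defined sequence `k₀ := f̃₀^(nε)(1)`, `k_{i+1} := f̃ᵢ^(nε)(kᵢ)`. -/
def kSeq (d nε : ℕ) (f : ℕ → ℕ) : ℕ → ℕ
  | 0 => (ftildeI d nε f 0)^[nε] 1
  | (i + 1) => (ftildeI d nε f i)^[nε] (kSeq d nε f i)

/-- `Kdef d τ ε̃ f = k_{i₀}` where `n_ε̃ := ⌈8d⁴/ε̃⁴⌉` and `i₀` is the least `i`
with `τ^(i+1) ≤ ε̃/(6d²)`. -/
noncomputable def Kdef (d : ℕ) (τ εt : ℝ) (f : ℕ → ℕ) : ℕ :=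
  kSeq d ⌈8 * (d : ℝ) ^ 4 / εt ^ 4⌉₊ f
    (sInf {i : ℕ | τ ^ (i + 1) ≤ εt / (6 * (d : ℝ) ^ 2)})

/-!
For nonexpansive `T` the operator `I - T` is monotone, and the point `y = s • w + (1 - s) • T y`
is a resolvent of it at the anchor `w`. Along a decreasing step size the distance from the anchor to
its resolvents increases, and the squared distance between two resolvents is at most the increment
of the squared distances. Boundedness of `C` therefore forces the resolvents of a fixed anchor to
be almost constant on some block of prescribed shape (pigeonhole).

Let `X j` be the point anchored at its own image `G (X j)`. If `X` is within `ρ` of `c` on a long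
block, then comparing it with the resolvents anchored at `G c` shows that `X` is within `τ * ρ + e`
of a new centre on a shorter block. Iterating, `X j` and `X (j + 1)` are close for some controlled
`j`. The point `X (j + 1)`, having the much smaller step size, is almost fixed by `T` with an
accuracy that may depend on `j`, while it inherits from `X j` the variational inequality against
all sufficiently good almost fixed points.
-/

section Growth

variable {d k : ℕ} {f : ℕ → ℕ}

lemma self_lt_sixteen_mul_sq (hd : 1 ≤ d) (hk : 1 ≤ k) : k < 16 * d * k ^ 2 :=
  calc k < 16 * k := by omega
    _ ≤ 16 * d * k ^ 2 := Nat.mul_le_mul (by omega) (Nat.le_self_pow two_ne_zero k)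

lemma sixteen_mul_sq_le_ftilde : 16 * d * k ^ 2 ≤ ftilde d f k := le_max_right _ _

lemma apply_sixteen_mul_sq_le_ftilde (hd : 1 ≤ d) (hk : 1 ≤ k) :
    f (16 * d * k ^ 2) ≤ ftilde d f k :=
  le_max_of_le_left <| Finset.le_sup (f := f) <|
    Finset.mem_Icc.2 ⟨hk.trans (self_lt_sixteen_mul_sq hd hk).le, le_rfl⟩

lemma lt_ftilde (hd : 1 ≤ d) (hk : 1 ≤ k) : k < ftilde d f k :=
  (self_lt_sixteen_mul_sq hd hk).trans_le sixteen_mul_sq_le_ftilde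

lemma ftilde_mono : Monotone (ftilde d f) := fun a b hab => by
  have hsq : 16 * d * a ^ 2 ≤ 16 * d * b ^ 2 := by gcongr
  exact max_le_max (Finset.sup_mono (Finset.Icc_subset_Icc le_rfl hsq)) hsq

lemma fIt_le_ftildeI (hd : 1 ≤ d) (n i k : ℕ) : fIt d n f i k ≤ ftildeI d n f i k := by
  rcases k.eq_zero_or_pos with rfl | hk
  · have hzero : ftilde d f 0 = 0 := by simp [ftilde, fM]
    simp [fIt, Function.iterate_fixed hzero]
  · calc fIt d n f i k ≤ fIt d n f i (16 * d * k ^ 2) :=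
          ftilde_mono.iterate _ (self_lt_sixteen_mul_sq hd hk).le
      _ ≤ ftildeI d n f i k := apply_sixteen_mul_sq_le_ftilde hd hk

lemma iterate_ftilde_le_iterate_ftildeI (hd : 1 ≤ d) (n i k : ℕ) :
    (ftilde d f)^[n ^ (i + 1)] k ≤ (ftildeI d n f i)^[n] k := by
  rw [pow_succ, Function.iterate_mul]
  exact (ftilde_mono.iterate _).iterate_le_of_le (fIt_le_ftildeI hd n i) n k

/-- The fast-growing sequence `f̃^(j)(1)`, which controls the step sizes. -/
def stepDenom (d : ℕ) (f : ℕ → ℕ) (j : ℕ) : ℕ := (ftilde d f)^[j] 1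

lemma stepDenom_succ (j : ℕ) : stepDenom d f (j + 1) = ftilde d f (stepDenom d f j) :=
  Function.iterate_succ_apply' _ _ _

lemma lt_stepDenom (hd : 1 ≤ d) (j : ℕ) : j < stepDenom d f j := by
  induction j with
  | zero => exact Nat.one_pos
  | succ j ih =>
    rw [stepDenom_succ]
    exact Nat.lt_of_le_of_lt ih (lt_ftilde hd (by omega))

lemma stepDenom_mono (hd : 1 ≤ d) : Monotone (stepDenom d f) :=
  monotone_nat_of_le_succ fun j => by
    rw [stepDenom_succ]
    exact (lt_ftilde hd (Nat.zero_lt_of_lt (lt_stepDenom hd j))).le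

lemma stepDenom_le_kSeq {m n : ℕ} (hd : 1 ≤ d) (hm : 1 ≤ m) (hmn : 2 * m ^ 2 ≤ n) (i : ℕ) :
    stepDenom d f (m + m ^ (i + 1)) ≤ kSeq d n f i := by
  induction i with
  | zero =>
    calc stepDenom d f (m + m ^ (0 + 1)) ≤ stepDenom d f (n ^ (0 + 1)) :=
          stepDenom_mono hd (by simp only [zero_add, pow_one]; nlinarith)
      _ ≤ kSeq d n f 0 := iterate_ftilde_le_iterate_ftildeI hd n 0 1
  | succ i ih =>
    have hpow : m ^ (i + 2) ≤ n ^ (i + 1) :=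
      calc m ^ (i + 2) ≤ m ^ (2 * (i + 1)) := Nat.pow_le_pow_right hm (by omega)
        _ = (m ^ 2) ^ (i + 1) := pow_mul _ _ _
        _ ≤ n ^ (i + 1) := Nat.pow_le_pow_left (by omega) _
    calc stepDenom d f (m + m ^ (i + 2))
        ≤ stepDenom d f (n ^ (i + 1) + (m + m ^ (i + 1))) := stepDenom_mono hd (by omega)
      _ = (ftilde d f)^[n ^ (i + 1)] (stepDenom d f (m + m ^ (i + 1))) :=
          Function.iterate_add_apply _ _ _ _
      _ ≤ (ftilde d f)^[n ^ (i + 1)] (kSeq d n f i) := ftilde_mono.iterate _ ih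
      _ ≤ kSeq d n f (i + 1) := iterate_ftilde_le_iterate_ftildeI hd n i _

/-- The step size `1 / (2 * d * f̃^(j)(1))`: times the diameter bound `d` it stays below
`1 / f̃^(j)(1)`. -/
noncomputable def stepSize (d : ℕ) (f : ℕ → ℕ) (j : ℕ) : ℝ := 1 / (2 * d * stepDenom d f j)

lemma one_le_stepDenom (hd : 1 ≤ d) (j : ℕ) : (1 : ℝ) ≤ stepDenom d f j := by
  exact_mod_cast Nat.zero_lt_of_lt (lt_stepDenom hd j)

lemma stepSize_mem_Ioc (hd : 1 ≤ d) (j : ℕ) : stepSize d f j ∈ Set.Ioc (0 : ℝ) 1 := by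
  have hp := one_le_stepDenom (f := f) hd j
  have hdR : (1 : ℝ) ≤ d := by exact_mod_cast hd
  refine ⟨by unfold stepSize; positivity, ?_⟩
  rw [stepSize, div_le_one (by positivity)]
  nlinarith

lemma stepSize_antitone (hd : 1 ≤ d) : Antitone (stepSize d f) := fun i j hij => by
  have hp := one_le_stepDenom (f := f) hd i
  have hle : (stepDenom d f i : ℝ) ≤ stepDenom d f j := by exact_mod_cast stepDenom_mono hd hij
  unfold stepSize
  gcongr

lemma stepSize_succ_mul_lt (hd : 1 ≤ d) (hf : ∀ k, 1 ≤ k → 1 ≤ f k) (j : ℕ) :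
    stepSize d f (j + 1) * d < 1 / f (16 * d * stepDenom d f j ^ 2) := by
  have hj : 1 ≤ stepDenom d f j := Nat.zero_lt_of_lt (lt_stepDenom hd j)
  have hle : (f (16 * d * stepDenom d f j ^ 2) : ℝ) ≤ stepDenom d f (j + 1) := by
    rw [stepDenom_succ]
    exact_mod_cast apply_sixteen_mul_sq_le_ftilde hd hj
  have hpos : (1 : ℝ) ≤ f (16 * d * stepDenom d f j ^ 2) := by
    exact_mod_cast hf _ (hj.trans (self_lt_sixteen_mul_sq hd hj).le)
  calc stepSize d f (j + 1) * d = 1 / (2 * stepDenom d f (j + 1)) := by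
        unfold stepSize; field_simp
    _ < 1 / f (16 * d * stepDenom d f j ^ 2) := by
        apply one_div_lt_one_div_of_lt <;> linarith

end Growth

section Estimates

lemma exists_sub_le_of_sub_le_mul {r : ℕ → ℝ} {m : ℕ} {δ : ℝ} (hm : 0 < m)
    (h : r m - r 0 ≤ m * δ) : ∃ b < m, r (b + 1) - r b ≤ δ := by
  have hsum : ∑ b ∈ Finset.range m, (r (b + 1) - r b) ≤ ∑ _b ∈ Finset.range m, δ := by
    rw [Finset.sum_range_sub]
    simpa using h
  obtain ⟨b, hb, hle⟩ :=
    Finset.exists_le_of_sum_le (Finset.nonempty_range_iff.2 hm.ne') hsum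
  exact ⟨b, Finset.mem_range.1 hb, hle⟩

lemma two_mul_ceil_sq_le {x : ℝ} (hx : 1 ≤ x) : 2 * ⌈x⌉₊ ^ 2 ≤ ⌈8 * x ^ 2⌉₊ := by
  have hceil : (⌈x⌉₊ : ℝ) ≤ 2 * x := by linarith [Nat.ceil_lt_add_one (zero_le_one.trans hx)]
  have hle : (2 * ⌈x⌉₊ ^ 2 : ℝ) ≤ ⌈8 * x ^ 2⌉₊ :=
    calc (2 * ⌈x⌉₊ ^ 2 : ℝ) ≤ 2 * (2 * x) ^ 2 := by gcongr
      _ = 8 * x ^ 2 := by ring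
      _ ≤ ⌈8 * x ^ 2⌉₊ := Nat.le_ceil _
  exact_mod_cast hle

lemma pow_sInf_succ_le {τ δ : ℝ} (hτ0 : 0 ≤ τ) (hτ1 : τ < 1) (hδ : 0 < δ) :
    τ ^ (sInf {i : ℕ | τ ^ (i + 1) ≤ δ} + 1) ≤ δ := by
  obtain ⟨N, hN⟩ := exists_pow_lt_of_lt_one hδ hτ1
  have hmem : N ∈ {i : ℕ | τ ^ (i + 1) ≤ δ} :=
    (pow_le_pow_of_le_one hτ0 hτ1.le N.le_succ).trans hN.le
  exact Nat.sInf_mem ⟨N, hmem⟩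

lemma vip_error_lt {d τ ε e P : ℝ} (hd : 0 < d) (hτ0 : 0 ≤ τ) (hτ1 : τ < 1) (hε : 0 < ε)
    (he : e = (1 - τ) ^ 2 / (6 + 8 * d) * ε) (hP0 : 0 ≤ P) (hP : P ≤ e / (6 * d ^ 2)) :
    e / 8 + (2 + τ) * d * (2 * (P * d + e / (1 - τ))) < ε / 2 := by
  have hτ : 0 < 1 - τ := by linarith
  have hE : (6 + 8 * d) * e ≤ ε := by
    rw [he, show (6 + 8 * d) * ((1 - τ) ^ 2 / (6 + 8 * d) * ε) = (1 - τ) ^ 2 * ε by field_simp]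
    exact mul_le_of_le_one_left hε.le (pow_le_one₀ hτ.le (by linarith))
  have hpow : 2 * (2 + τ) * (P * d ^ 2) ≤ e := by
    rw [le_div_iff₀ (by positivity)] at hP
    nlinarith [mul_nonneg hP0 (sq_nonneg d)]
  have hdrift : (6 + 8 * d) * (2 * (2 + τ) * d * (e / (1 - τ))) ≤ 4 * d * ε :=
    calc (6 + 8 * d) * (2 * (2 + τ) * d * (e / (1 - τ)))
        = 2 * d * ε * ((2 + τ) * (1 - τ)) := by rw [he]; field_simp
      _ ≤ 2 * d * ε * 2 := by gcongr; nlinarith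
      _ = 4 * d * ε := by ring
  refine lt_of_mul_lt_mul_left (a := 6 + 8 * d) ?_ (by positivity)
  calc (6 + 8 * d) * (e / 8 + (2 + τ) * d * (2 * (P * d + e / (1 - τ))))
      = (6 + 8 * d) * (e / 8 + 2 * (2 + τ) * (P * d ^ 2))
        + (6 + 8 * d) * (2 * (2 + τ) * d * (e / (1 - τ))) := by ring
    _ ≤ (6 + 8 * d) * (e / 8 + e) + 4 * d * ε := by gcongr
    _ < (6 + 8 * d) * (ε / 2) := by linarith

end Estimates

section Resolvent

variable {H : Type*} [NormedAddCommGroup H] [InnerProductSpace ℝ H]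

lemma inner_sub_self_nonneg {a b : H} (h : ‖b‖ ≤ ‖a‖) : 0 ≤ ⟪a - b, a⟫ := by
  rw [inner_sub_left, real_inner_self_eq_norm_sq, sub_nonneg]
  calc ⟪b, a⟫ ≤ ‖b‖ * ‖a‖ := real_inner_le_norm b a
    _ ≤ ‖a‖ * ‖a‖ := by gcongr
    _ = ‖a‖ ^ 2 := (sq _).symm

lemma norm_sq_lt_norm_sub_smul_sq_add {a b : H} {t ε : ℝ} (ht : t ∈ Set.Icc (0 : ℝ) 1)
    (hε : 0 < ε) (h : ⟪a, b⟫ < ε / 2) : ‖a‖ ^ 2 < ‖a - t • b‖ ^ 2 + ε := by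
  have hscaled : t * ⟪a, b⟫ < ε / 2 := by
    rcases le_or_gt ⟪a, b⟫ 0 with hneg | hpos
    · linarith [mul_nonpos_of_nonneg_of_nonpos ht.1 hneg]
    · linarith [mul_le_of_le_one_left hpos.le ht.2]
  rw [norm_sub_sq_real, real_inner_smul_right]
  linarith [sq_nonneg ‖t • b‖]

lemma inner_sub_le_inner_sub_add {x u v gx gu : H} {τ D : ℝ} (hG : ‖gu - gx‖ ≤ τ * ‖u - x‖)
    (hv : ‖v - u‖ ≤ D) (hx : ‖gx - x‖ ≤ D) :
    ⟪gu - u, v - u⟫ ≤ ⟪gx - x, v - x⟫ + (2 + τ) * D * ‖u - x‖ := by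
  have hsplit : ⟪gu - u, v - u⟫ =
      ⟪gx - x, v - x⟫ + ⟪gu - gx - (u - x), v - u⟫ + ⟪gx - x, x - u⟫ := by
    simp only [inner_sub_left, inner_sub_right]; ring
  have hmove : ⟪gu - gx - (u - x), v - u⟫ ≤ (1 + τ) * ‖u - x‖ * D :=
    calc ⟪gu - gx - (u - x), v - u⟫ ≤ ‖gu - gx - (u - x)‖ * ‖v - u‖ := real_inner_le_norm _ _
      _ ≤ ((1 + τ) * ‖u - x‖) * D := by
          have : ‖gu - gx - (u - x)‖ ≤ (1 + τ) * ‖u - x‖ := by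
            linarith [norm_sub_le (gu - gx) (u - x)]
          exact mul_le_mul this hv (norm_nonneg _) ((norm_nonneg _).trans this)
  have hbase : ⟪gx - x, x - u⟫ ≤ D * ‖u - x‖ :=
    calc ⟪gx - x, x - u⟫ ≤ ‖gx - x‖ * ‖x - u‖ := real_inner_le_norm _ _
      _ ≤ D * ‖u - x‖ := by rw [norm_sub_rev x u]; gcongr
  linarith

variable {C : Set H} {T : C → C}

/-- `y` is the point anchored at `w` with step size `s`, i.e. the resolvent at `w` of the
monotone operator `((1 - s) / s) • (I - T)`. It is a relation rather than a function of `w`, since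
the anchor `w = G y` may depend on `y`. -/
def IsAnchored (T : C → C) (s : ℝ) (w : H) (y : C) : Prop :=
  (y : H) = s • w + (1 - s) • (T y : H)

lemma exists_isAnchored (hne : C.Nonempty) (hC : IsComplete C) (hcv : Convex ℝ C)
    (hT : ∀ x y : C, ‖(T x : H) - T y‖ ≤ ‖(x : H) - y‖) {s : ℝ} (hs : s ∈ Set.Ioc (0 : ℝ) 1)
    {τ : ℝ} (hτ0 : 0 ≤ τ) (hτ1 : τ < 1) {G : C → C}
    (hG : ∀ x y : C, ‖(G x : H) - G y‖ ≤ τ * ‖(x : H) - y‖) :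
    ∃ y : C, IsAnchored T s (G y) y := by
  obtain ⟨hs0, hs1⟩ := hs
  have hs' : 0 ≤ 1 - s := by linarith
  let F : C → C := fun y =>
    ⟨s • (G y : H) + (1 - s) • (T y : H), hcv (G y).2 (T y).2 hs0.le hs' (by ring)⟩
  have hF (x y : C) : dist (F x) (F y) ≤ (s * τ + (1 - s)) * dist x y := by
    rw [Subtype.dist_eq, Subtype.dist_eq, dist_eq_norm, dist_eq_norm]
    calc ‖(F x : H) - F y‖ = ‖s • ((G x : H) - G y) + (1 - s) • ((T x : H) - T y)‖ := by
          congr 1; simp only [F]; module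
      _ ≤ s * ‖(G x : H) - G y‖ + (1 - s) * ‖(T x : H) - T y‖ := by
          simpa only [norm_smul, Real.norm_of_nonneg hs0.le, Real.norm_of_nonneg hs'] using
            norm_add_le (s • ((G x : H) - G y)) ((1 - s) • ((T x : H) - T y))
      _ ≤ s * (τ * ‖(x : H) - y‖) + (1 - s) * ‖(x : H) - y‖ := by
          gcongr <;> [exact hG x y; exact hT x y]
      _ = (s * τ + (1 - s)) * ‖(x : H) - y‖ := by ring
  have hcontr : ContractingWith ⟨s * τ + (1 - s), by positivity⟩ F :=
    ⟨NNReal.coe_lt_coe.1 (by change s * τ + (1 - s) < 1; nlinarith),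
      LipschitzWith.of_dist_le_mul hF⟩
  have : CompleteSpace C := hC.completeSpace_coe
  have : Nonempty C := hne.to_subtype
  exact ⟨hcontr.fixedPoint F, (congrArg Subtype.val hcontr.fixedPoint_isFixedPt).symm⟩

namespace IsAnchored

variable {s : ℝ} {w : H} {y : C}

lemma smul_sub_apply (h : IsAnchored T s w y) : (1 - s) • ((y : H) - T y) = s • (w - y) := by
  have hTy : (1 - s) • (T y : H) = y - s • w := eq_sub_of_add_eq' h.symm
  rw [smul_sub, hTy]
  module

lemma norm_sub_apply_eq (h : IsAnchored T s w y) (hs : 0 ≤ s) :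
    ‖(y : H) - T y‖ = s * ‖w - T y‖ := by
  have hy : (y : H) - T y = s • (w - T y) := by
    nth_rewrite 1 [h]
    module
  rw [hy, norm_smul, Real.norm_of_nonneg hs]

lemma norm_sub_le {w' : H} {y' : C} (h : IsAnchored T s w y) (h' : IsAnchored T s w' y')
    (hT : ‖(T y : H) - T y'‖ ≤ ‖(y : H) - y'‖) (hs : s ∈ Set.Ioc (0 : ℝ) 1) :
    ‖(y : H) - y'‖ ≤ ‖w - w'‖ := by
  have hs' : 0 ≤ 1 - s := by linarith [hs.2]
  have hle : ‖(y : H) - y'‖ ≤ s * ‖w - w'‖ + (1 - s) * ‖(y : H) - y'‖ :=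
    calc ‖(y : H) - y'‖ = ‖s • (w - w') + (1 - s) • ((T y : H) - T y')‖ := by
          congr 1
          nth_rewrite 1 [h, h']
          module
      _ ≤ s * ‖w - w'‖ + (1 - s) * ‖(T y : H) - T y'‖ := by
          simpa only [norm_smul, Real.norm_of_nonneg hs.1.le, Real.norm_of_nonneg hs'] using
            norm_add_le (s • (w - w')) ((1 - s) • ((T y : H) - T y'))
      _ ≤ s * ‖w - w'‖ + (1 - s) * ‖(y : H) - y'‖ := by gcongr
  exact le_of_mul_le_mul_left (by linarith) hs.1

lemma norm_sub_sq_le {s' : ℝ} {y' : C} (h : IsAnchored T s w y) (h' : IsAnchored T s' w y')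
    (hT : ‖(T y : H) - T y'‖ ≤ ‖(y : H) - y'‖) (hs' : 0 < s') (hle : s' ≤ s) (hs : s ≤ 1) :
    ‖(y' : H) - y‖ ^ 2 ≤ ‖w - y'‖ ^ 2 - ‖w - y‖ ^ 2 := by
  rcases hle.eq_or_lt with rfl | hlt
  · have heq : (y : H) = y' := by
      simpa [sub_eq_zero] using h.norm_sub_le h' hT ⟨hs', hs⟩
    simp [heq]
  have hmono : 0 ≤ ⟪((y : H) - T y) - (y' - T y'), (y : H) - y'⟫ := by
    rw [sub_sub_sub_comm]
    exact inner_sub_self_nonneg hT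
  have hscaled : (1 - s) * (1 - s') * ⟪((y : H) - T y) - (y' - T y'), (y : H) - y'⟫ =
      (s - s') * ⟪w - y, (y : H) - y'⟫ - s' * (1 - s) * ‖(y' : H) - y‖ ^ 2 := by
    calc (1 - s) * (1 - s') * ⟪((y : H) - T y) - (y' - T y'), (y : H) - y'⟫
        = ⟪(1 - s') • (1 - s) • ((y : H) - T y) - (1 - s) • (1 - s') • ((y' : H) - T y'),
            (y : H) - y'⟫ := by
          rw [← real_inner_smul_left]; congr 1; module
      _ = ⟪(s - s') • (w - y) - (s' * (1 - s)) • ((y : H) - y'), (y : H) - y'⟫ := by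
          rw [h.smul_sub_apply, h'.smul_sub_apply]; congr 1; module
      _ = (s - s') * ⟪w - y, (y : H) - y'⟫ - s' * (1 - s) * ‖(y' : H) - y‖ ^ 2 := by
          rw [inner_sub_left, real_inner_smul_left, real_inner_smul_left,
            real_inner_self_eq_norm_sq, norm_sub_rev]
  have hinner : 0 ≤ ⟪w - y, (y : H) - y'⟫ := by
    have h1 : 0 ≤ 1 - s := by linarith
    have h2 : 0 ≤ 1 - s' := by linarith
    have := mul_nonneg (mul_nonneg h1 h2) hmono
    have := mul_nonneg (mul_nonneg hs'.le h1) (sq_nonneg ‖(y' : H) - y‖)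
    exact nonneg_of_mul_nonneg_right (by linarith) (sub_pos.2 hlt)
  have hexpand : ‖w - y'‖ ^ 2 =
      ‖w - y‖ ^ 2 + 2 * ⟪w - y, (y : H) - y'⟫ + ‖(y' : H) - y‖ ^ 2 := by
    rw [norm_sub_rev (y' : H), ← norm_add_sq_real, sub_add_sub_cancel]
  linarith

lemma mul_inner_le {v : C} (h : IsAnchored T s w y)
    (hT : ‖(T v : H) - T y‖ ≤ ‖(v : H) - y‖) (hs0 : 0 ≤ s) (hs1 : s ≤ 1) :
    s * ⟪w - y, (v : H) - y⟫ ≤ ‖(T v : H) - v‖ * ‖(v : H) - y‖ := by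
  have hmono : 0 ≤ ⟪((v : H) - T v) - (y - T y), (v : H) - y⟫ := by
    rw [sub_sub_sub_comm]
    exact inner_sub_self_nonneg hT
  have hs' : 0 ≤ 1 - s := by linarith
  calc s * ⟪w - y, (v : H) - y⟫ = (1 - s) * ⟪(y : H) - T y, (v : H) - y⟫ := by
        rw [← real_inner_smul_left, ← h.smul_sub_apply, real_inner_smul_left]
    _ ≤ (1 - s) * ⟪(v : H) - T v, (v : H) - y⟫ := by
        rw [inner_sub_left, sub_nonneg] at hmono
        gcongr
    _ ≤ (1 - s) * (‖(T v : H) - v‖ * ‖(v : H) - y‖) := by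
        rw [norm_sub_rev (T v : H)]
        gcongr
        exact real_inner_le_norm _ _
    _ ≤ ‖(T v : H) - v‖ * ‖(v : H) - y‖ := mul_le_of_le_one_left (by positivity) (by linarith)

end IsAnchored

variable {G : C → C} {s : ℕ → ℝ} {X : ℕ → C} {D e τ : ℝ} {m : ℕ}

lemma exists_block_norm_sub_le {w : H} {y : ℕ → C}
    (hT : ∀ x y : C, ‖(T x : H) - T y‖ ≤ ‖(x : H) - y‖)
    (hs : ∀ i, s i ∈ Set.Ioc (0 : ℝ) 1) (hanti : Antitone s)
    (hy : ∀ i, IsAnchored T (s i) w (y i)) (hD : ∀ i, ‖w - y i‖ ≤ D)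
    (he : 0 ≤ e) (hm : 0 < m) (hDe : D ^ 2 ≤ m * e ^ 2) (j M : ℕ) :
    ∃ b < m, ∀ i ∈ Set.Icc (j + b * M) (j + (b + 1) * M),
      ‖(y i : H) - y (j + b * M)‖ ≤ e := by
  have hvar {i k : ℕ} (hik : i ≤ k) :
      ‖(y k : H) - y i‖ ^ 2 ≤ ‖w - y k‖ ^ 2 - ‖w - y i‖ ^ 2 :=
    (hy i).norm_sub_sq_le (hy k) (hT _ _) (hs k).1 (hanti hik) (hs i).2
  have htotal : ‖w - y (j + m * M)‖ ^ 2 - ‖w - y (j + 0 * M)‖ ^ 2 ≤ m * e ^ 2 := by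
    have : ‖w - y (j + m * M)‖ ^ 2 ≤ D ^ 2 := by gcongr; exact hD _
    linarith [sq_nonneg ‖w - y (j + 0 * M)‖]
  obtain ⟨b, hb, hincr⟩ :=
    exists_sub_le_of_sub_le_mul (r := fun b => ‖w - y (j + b * M)‖ ^ 2) hm htotal
  refine ⟨b, hb, fun i hi => abs_le_of_sq_le_sq' ?_ he |>.2⟩
  linarith [hvar hi.1, hvar hi.2, sq_nonneg ‖(y (j + (b + 1) * M) : H) - y i‖]

lemma exists_subblock_norm_sub_le (hT : ∀ x y : C, ‖(T x : H) - T y‖ ≤ ‖(x : H) - y‖)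
    (hτ0 : 0 ≤ τ) (hG : ∀ x y : C, ‖(G x : H) - G y‖ ≤ τ * ‖(x : H) - y‖)
    (hs : ∀ i, s i ∈ Set.Ioc (0 : ℝ) 1) (hanti : Antitone s)
    (hres : ∀ i (w : C), ∃ y, IsAnchored T (s i) w y)
    (hX : ∀ i, IsAnchored T (s i) (G (X i)) (X i)) (hD : ∀ x ∈ C, ∀ y ∈ C, ‖x - y‖ ≤ D)
    (he : 0 ≤ e) (hm : 0 < m) (hDe : D ^ 2 ≤ m * e ^ 2) {j M : ℕ} {c : C} {ρ : ℝ}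
    (hρ : ∀ i ∈ Set.Icc j (j + m * M), ‖(X i : H) - c‖ ≤ ρ) :
    ∃ b < m, ∃ c' : C, ∀ i ∈ Set.Icc (j + b * M) (j + (b + 1) * M),
      ‖(X i : H) - c'‖ ≤ τ * ρ + e := by
  choose y hy using fun i => hres i (G c)
  obtain ⟨b, hb, hblock⟩ := exists_block_norm_sub_le hT hs hanti hy
    (fun i => hD _ (G c).2 _ (y i).2) he hm hDe j M
  refine ⟨b, hb, y (j + b * M), fun i hi => ?_⟩
  have hi' : i ∈ Set.Icc j (j + m * M) :=
    ⟨(Nat.le_add_right _ _).trans hi.1, hi.2.trans (by gcongr; exact hb)⟩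
  calc ‖(X i : H) - y (j + b * M)‖ ≤ ‖(X i : H) - y i‖ + ‖(y i : H) - y (j + b * M)‖ :=
        norm_sub_le_norm_sub_add_norm_sub _ _ _
    _ ≤ ‖(G (X i) : H) - G c‖ + e :=
        add_le_add ((hX i).norm_sub_le (hy i) (hT _ _) (hs i)) (hblock i hi)
    _ ≤ τ * ρ + e := by
        gcongr
        exact (hG _ _).trans (by gcongr; exact hρ i hi')

lemma exists_block_norm_sub_le_pow (hT : ∀ x y : C, ‖(T x : H) - T y‖ ≤ ‖(x : H) - y‖)
    (hτ0 : 0 ≤ τ) (hτ1 : τ < 1) (hG : ∀ x y : C, ‖(G x : H) - G y‖ ≤ τ * ‖(x : H) - y‖)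
    (hs : ∀ i, s i ∈ Set.Ioc (0 : ℝ) 1) (hanti : Antitone s)
    (hres : ∀ i (w : C), ∃ y, IsAnchored T (s i) w y)
    (hX : ∀ i, IsAnchored T (s i) (G (X i)) (X i)) (hD : ∀ x ∈ C, ∀ y ∈ C, ‖x - y‖ ≤ D)
    (he : 0 ≤ e) (hm : 0 < m) (hDe : D ^ 2 ≤ m * e ^ 2) (j₀ i l : ℕ) :
    ∃ j, j₀ ≤ j ∧ j + m ^ l ≤ j₀ + m ^ (l + i) ∧ ∃ c : C, ∀ k ∈ Set.Icc j (j + m ^ l),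
      ‖(X k : H) - c‖ ≤ τ ^ i * D + e / (1 - τ) := by
  have hτ : 0 < 1 - τ := sub_pos.2 hτ1
  induction i generalizing l with
  | zero =>
    refine ⟨j₀, le_rfl, le_rfl, X j₀, fun k _ => ?_⟩
    have : 0 ≤ e / (1 - τ) := by positivity
    linarith [hD _ (X k).2 _ (X j₀).2]
  | succ i ih =>
    obtain ⟨j, hj₀, hend, c, hc⟩ := ih (l + 1)
    rw [pow_succ'] at hend hc
    obtain ⟨b, hb, c', hc'⟩ :=
      exists_subblock_norm_sub_le hT hτ0 hG hs hanti hres hX hD he hm hDe hc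
    have hblock : j + b * m ^ l + m ^ l = j + (b + 1) * m ^ l := by ring
    have hsub : (b + 1) * m ^ l ≤ m * m ^ l := Nat.mul_le_mul_right _ hb
    refine ⟨j + b * m ^ l, by omega, ?_, c', fun k hk => ?_⟩
    · rw [show l + (i + 1) = l + 1 + i by ring]
      omega
    · rw [hblock] at hk
      have hgeom : τ * (e / (1 - τ)) + e = e / (1 - τ) := by field_simp; ring
      calc ‖(X k : H) - c'‖ ≤ τ * (τ ^ i * D + e / (1 - τ)) + e := hc' k hk
        _ = τ ^ (i + 1) * D + e / (1 - τ) := by rw [mul_add, add_assoc, hgeom, pow_succ']; ring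

lemma exists_norm_succ_sub_le (hT : ∀ x y : C, ‖(T x : H) - T y‖ ≤ ‖(x : H) - y‖)
    (hτ0 : 0 ≤ τ) (hτ1 : τ < 1) (hG : ∀ x y : C, ‖(G x : H) - G y‖ ≤ τ * ‖(x : H) - y‖)
    (hs : ∀ i, s i ∈ Set.Ioc (0 : ℝ) 1) (hanti : Antitone s)
    (hres : ∀ i (w : C), ∃ y, IsAnchored T (s i) w y)
    (hX : ∀ i, IsAnchored T (s i) (G (X i)) (X i)) (hD : ∀ x ∈ C, ∀ y ∈ C, ‖x - y‖ ≤ D)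
    (he : 0 ≤ e) (hm : 0 < m) (hDe : D ^ 2 ≤ m * e ^ 2) (j₀ i : ℕ) :
    ∃ j, j₀ ≤ j ∧ j < j₀ + m ^ i ∧
      ‖(X (j + 1) : H) - X j‖ ≤ 2 * (τ ^ i * D + e / (1 - τ)) := by
  obtain ⟨j, hj₀, hend, c, hc⟩ :=
    exists_block_norm_sub_le_pow hT hτ0 hτ1 hG hs hanti hres hX hD he hm hDe j₀ i 0
  simp only [pow_zero, zero_add] at hend hc
  refine ⟨j, hj₀, hend, ?_⟩
  have hleft := hc j ⟨le_rfl, j.le_succ⟩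
  have hright := hc (j + 1) ⟨j.le_succ, le_rfl⟩
  rw [norm_sub_rev] at hleft
  linarith [norm_sub_le_norm_sub_add_norm_sub (X (j + 1) : H) c (X j)]

end Resolvent

section VariationalInequality

variable {H : Type*} [NormedAddCommGroup H] [InnerProductSpace ℝ H] {C : Set H} {T G : C → C}
  {d : ℕ} {f : ℕ → ℕ} {τ e : ℝ}

lemma IsAnchored.inner_le_of_norm_lt {w : H} {x v : C} {j : ℕ} (hd : 1 ≤ d)
    (h : IsAnchored T (stepSize d f j) w x) (hT : ‖(T v : H) - T x‖ ≤ ‖(v : H) - x‖)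
    (hbd : ‖(v : H) - x‖ ≤ d) (hde : (d : ℝ) ≤ stepDenom d f j * e)
    (hv : ‖(T v : H) - v‖ < 1 / (16 * d * stepDenom d f j ^ 2 : ℕ)) :
    ⟪w - x, (v : H) - x⟫ ≤ e / 8 := by
  have hs := stepSize_mem_Ioc (f := f) hd j
  have hp := one_le_stepDenom (f := f) hd j
  refine le_of_mul_le_mul_left ?_ hs.1
  calc stepSize d f j * ⟪w - x, (v : H) - x⟫ ≤ ‖(T v : H) - v‖ * ‖(v : H) - x‖ :=
        h.mul_inner_le hT hs.1.le hs.2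
    _ ≤ 1 / (16 * d * stepDenom d f j ^ 2 : ℕ) * d := by gcongr
    _ = stepSize d f j * (d / (8 * stepDenom d f j)) := by
        unfold stepSize; push_cast; field_simp; ring
    _ ≤ stepSize d f j * (e / 8) := by
        gcongr ?_ * ?_
        · exact hs.1.le
        · rw [div_le_div_iff₀ (by positivity) (by norm_num)]
          linarith

lemma exists_inner_le_of_norm_lt (hd : 1 ≤ d) (hne : C.Nonempty) (hC : IsComplete C)
    (hcv : Convex ℝ C) (hbd : ∀ x ∈ C, ∀ y ∈ C, ‖x - y‖ ≤ (d : ℝ))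
    (hT : ∀ x y : C, ‖(T x : H) - T y‖ ≤ ‖(x : H) - y‖) (hτ0 : 0 ≤ τ) (hτ1 : τ < 1)
    (hG : ∀ x y : C, ‖(G x : H) - G y‖ ≤ τ * ‖(x : H) - y‖) (hf : ∀ k, 1 ≤ k → 1 ≤ f k)
    (he0 : 0 < e) (he1 : e ≤ 1) {m : ℕ} (hm : 0 < m) (hme : (d : ℝ) ^ 2 ≤ m * e ^ 2) (i : ℕ) :
    ∃ j < m + m ^ i, ∃ u : C,
      ‖(u : H) - T u‖ < 1 / f (16 * d * stepDenom d f j ^ 2) ∧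
      ∀ v : C, ‖(T v : H) - v‖ < 1 / (16 * d * stepDenom d f j ^ 2 : ℕ) →
        ⟪(G u : H) - u, (v : H) - u⟫ ≤
          e / 8 + (2 + τ) * d * (2 * (τ ^ i * d + e / (1 - τ))) := by
  have hs := stepSize_mem_Ioc (f := f) hd
  have hres (i : ℕ) (w : C) : ∃ y, IsAnchored T (stepSize d f i) w y :=
    exists_isAnchored hne hC hcv hT (hs i) le_rfl zero_lt_one (G := fun _ => w) (by simp)
  choose X hX using fun i => exists_isAnchored hne hC hcv hT (hs i) hτ0 hτ1 hG
  obtain ⟨j, hmj, hj, hclose⟩ := exists_norm_succ_sub_le hT hτ0 hτ1 hG hs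
    (stepSize_antitone hd) hres hX hbd he0.le hm hme m i
  have hde : (d : ℝ) ≤ stepDenom d f j * e := by
    have hdR : (1 : ℝ) ≤ d := by exact_mod_cast hd
    have hmR : (m : ℝ) ≤ stepDenom d f j := by exact_mod_cast hmj.trans (lt_stepDenom hd j).le
    calc (d : ℝ) ≤ d ^ 2 := by nlinarith
      _ ≤ m * e ^ 2 := hme
      _ ≤ stepDenom d f j * e := by gcongr; nlinarith
  refine ⟨j, hj, X (j + 1), ?_, fun v hv => ?_⟩
  · calc ‖(X (j + 1) : H) - T (X (j + 1))‖
        = stepSize d f (j + 1) * ‖(G (X (j + 1)) : H) - T (X (j + 1))‖ :=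
          (hX _).norm_sub_apply_eq (hs _).1.le
      _ ≤ stepSize d f (j + 1) * d := by
          gcongr
          · exact (hs _).1.le
          · exact hbd _ (G _).2 _ (T _).2
      _ < 1 / f (16 * d * stepDenom d f j ^ 2) := stepSize_succ_mul_lt hd hf j
  · refine (inner_sub_le_inner_sub_add (hG (X (j + 1)) (X j)) (hbd _ v.2 _ (X _).2)
      (hbd _ (G (X j)).2 _ (X j).2)).trans ?_
    gcongr
    exact (hX j).inner_le_of_norm_lt hd (hT _ _) (hbd _ v.2 _ (X j).2) hde hv

lemma exists_inner_lt_of_norm_lt (hd : 1 ≤ d) (hne : C.Nonempty) (hC : IsComplete C)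
    (hcv : Convex ℝ C) (hbd : ∀ x ∈ C, ∀ y ∈ C, ‖x - y‖ ≤ (d : ℝ))
    (hT : ∀ x y : C, ‖(T x : H) - T y‖ ≤ ‖(x : H) - y‖) (hτ0 : 0 ≤ τ) (hτ1 : τ < 1)
    (hG : ∀ x y : C, ‖(G x : H) - G y‖ ≤ τ * ‖(x : H) - y‖) (hf : ∀ k, 1 ≤ k → 1 ≤ f k)
    {ε : ℝ} (hε : ε ∈ Set.Ioc (0 : ℝ) 1) :
    ∃ k, 1 ≤ k ∧ k ≤ Kdef d τ ((1 - τ) ^ 2 / (6 + 8 * (d : ℝ)) * ε) f ∧ ∃ u : C,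
      ‖(u : H) - T u‖ < 1 / f k ∧
      ∀ v : C, ‖(T v : H) - v‖ < 1 / k → ⟪(G u : H) - u, (v : H) - u⟫ < ε / 2 := by
  obtain ⟨hε0, hε1⟩ := hε
  have hdR : (1 : ℝ) ≤ d := by exact_mod_cast hd
  set e : ℝ := (1 - τ) ^ 2 / (6 + 8 * (d : ℝ)) * ε with he
  have he0 : 0 < e := by
    have := sub_pos.2 hτ1
    positivity
  have he1 : e ≤ 1 := by
    refine mul_le_one₀ ?_ hε0.le hε1
    rw [div_le_one (by positivity)]
    nlinarith
  set i₀ : ℕ := sInf {i : ℕ | τ ^ (i + 1) ≤ e / (6 * (d : ℝ) ^ 2)}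
  have hpow : τ ^ (i₀ + 1) ≤ e / (6 * (d : ℝ) ^ 2) := pow_sInf_succ_le hτ0 hτ1 (by positivity)
  set m : ℕ := ⌈((d : ℝ) / e) ^ 2⌉₊
  have hratio : 1 ≤ ((d : ℝ) / e) ^ 2 := one_le_pow₀ ((one_le_div he0).2 (he1.trans hdR))
  have hm : 0 < m := Nat.ceil_pos.2 (zero_lt_one.trans_le hratio)
  have hme : (d : ℝ) ^ 2 ≤ m * e ^ 2 := by
    rw [← div_le_iff₀ (by positivity), ← div_pow]
    exact Nat.le_ceil _
  have hmn : 2 * m ^ 2 ≤ ⌈8 * (d : ℝ) ^ 4 / e ^ 4⌉₊ := by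
    rw [show 8 * (d : ℝ) ^ 4 / e ^ 4 = 8 * (((d : ℝ) / e) ^ 2) ^ 2 by field_simp]
    exact two_mul_ceil_sq_le hratio
  obtain ⟨j, hj, u, hu, hvip⟩ :=
    exists_inner_le_of_norm_lt hd hne hC hcv hbd hT hτ0 hτ1 hG hf he0 he1 hm hme (i₀ + 1)
  have hp : 1 ≤ stepDenom d f j := Nat.zero_lt_of_lt (lt_stepDenom hd j)
  have herror := vip_error_lt (d := d) (by positivity) hτ0 hτ1 hε0 he (by positivity) hpow
  refine ⟨16 * d * stepDenom d f j ^ 2, hp.trans (self_lt_sixteen_mul_sq hd hp).le, ?_, u, hu,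
    fun v hv => (hvip v hv).trans_lt herror⟩
  calc 16 * d * stepDenom d f j ^ 2 ≤ stepDenom d f (j + 1) := by
        rw [stepDenom_succ]
        exact sixteen_mul_sq_le_ftilde
    _ ≤ stepDenom d f (m + m ^ (i₀ + 1)) := stepDenom_mono hd hj
    _ ≤ Kdef d τ e f := stepDenom_le_kSeq hd hm hmn i₀

theorem quantitative_vip_solution_general (hd : 1 ≤ d) (hne : C.Nonempty) (hC : IsComplete C)
    (hcv : Convex ℝ C) (hbd : ∀ x ∈ C, ∀ y ∈ C, ‖x - y‖ ≤ (d : ℝ))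
    (hT : ∀ x y : C, ‖(T x : H) - T y‖ ≤ ‖(x : H) - y‖) (hτ0 : 0 ≤ τ) (hτ1 : τ < 1)
    (hG : ∀ x y : C, ‖(G x : H) - G y‖ ≤ τ * ‖(x : H) - y‖) (hf : ∀ k, 1 ≤ k → 1 ≤ f k)
    {ε : ℝ} (hε : ε ∈ Set.Ioc (0 : ℝ) 1) :
    ∃ (u : C) (φ : C → Set.Ioc (0 : ℝ) 1),
      (∀ Δ : C → (C → Set.Ioc (0 : ℝ) 1) → Set.Ioc (0 : ℝ) 1,
        (∀ k : ℕ, 1 ≤ k → ∀ φ' : C → Set.Ioc (0 : ℝ) 1,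
          (∀ v : C, (1 : ℝ) / k ≤ φ' v) → ∀ v : C, (1 : ℝ) / f k ≤ Δ v φ') →
        ‖(u : H) - T u‖ < Δ u φ) ∧
      (∀ t ∈ Set.Icc (0 : ℝ) 1, ∀ v : C, ‖(T v : H) - v‖ < φ v →
        ‖(G u : H) - u‖ ^ 2 < ‖(G u : H) - ((1 - t) • (u : H) + t • (v : H))‖ ^ 2 + ε) ∧
      ∀ v : C, (1 : ℝ) / Kdef d τ ((1 - τ) ^ 2 / (6 + 8 * (d : ℝ)) * ε) f ≤ φ v := by
  obtain ⟨k, hk, hkK, u, hu, hvip⟩ :=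
    exists_inner_lt_of_norm_lt hd hne hC hcv hbd hT hτ0 hτ1 hG hf hε
  have hkR : (1 : ℝ) ≤ k := by exact_mod_cast hk
  refine ⟨u, fun _ => ⟨1 / k, by positivity, (div_le_one (by positivity)).2 hkR⟩,
    fun Δ hΔ => hu.trans_le (hΔ k hk _ (fun _ => le_rfl) u), fun t ht v hv => ?_, fun _ => ?_⟩
  · have hmove : (G u : H) - ((1 - t) • (u : H) + t • (v : H)) =
        (G u - u) - t • ((v : H) - u) := by module
    rw [hmove]
    exact norm_sq_lt_norm_sub_smul_sq_add ht hε.1 (hvip v hv)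
  · exact one_div_le_one_div_of_le (by positivity) (by exact_mod_cast hkK)

end VariationalInequality

/-- Quantitative solution to the variational inequality problem (solution of
Problem 1), together with a majorant for the solution functional `φ`. -/
theorem quantitative_vip_solution
    {H : Type*} [NormedAddCommGroup H] [InnerProductSpace ℝ H] [CompleteSpace H]
    (d : ℕ) (hd : 1 ≤ d)
    (C : Set H) (hne : C.Nonempty) (hcl : IsClosed C) (hcv : Convex ℝ C)
    (hbd : ∀ x ∈ C, ∀ y ∈ C, ‖x - y‖ ≤ (d : ℝ))
    (T : C → C) (hT : ∀ x y : C, ‖(T x : H) - (T y : H)‖ ≤ ‖(x : H) - (y : H)‖)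
    (hfix : ∃ p : C, T p = p)
    (τ : ℝ) (hτ0 : 0 ≤ τ) (hτ1 : τ < 1)
    (G : C → C) (hG : ∀ x y : C, ‖(G x : H) - (G y : H)‖ ≤ τ * ‖(x : H) - (y : H)‖)
    (ε : ℝ) (hε : ε ∈ Set.Ioc (0 : ℝ) 1) (t : ℝ) (ht : t ∈ Set.Icc (0 : ℝ) 1)
    (Δ : C → (C → Set.Ioc (0 : ℝ) 1) → Set.Ioc (0 : ℝ) 1)
    (V : C → (C → Set.Ioc (0 : ℝ) 1) → C)
    (f : ℕ → ℕ) (hf : ∀ k, 1 ≤ k → 1 ≤ f k)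
    (hmaj : ∀ k : ℕ, 1 ≤ k → ∀ φ' : C → Set.Ioc (0 : ℝ) 1,
      (∀ v : C, (1 : ℝ) / k ≤ (φ' v : ℝ)) → ∀ v : C, (1 : ℝ) / (f k) ≤ (Δ v φ' : ℝ)) :
    ∃ (u : C) (φ : C → Set.Ioc (0 : ℝ) 1),
      ‖(u : H) - (T u : H)‖ < (Δ u φ : ℝ) ∧
      (‖(T (V u φ) : H) - (V u φ : H)‖ < (φ (V u φ) : ℝ) →
        ‖(G u : H) - (u : H)‖ ^ 2 <
          ‖(G u : H) - ((1 - t) • (u : H) + t • (V u φ : H))‖ ^ 2 + ε) ∧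
      (∀ v : C,
        (1 : ℝ) / (Kdef d τ ((1 - τ) ^ 2 / (6 + 8 * (d : ℝ)) * ε) f) ≤ (φ v : ℝ)) := by
  obtain ⟨u, φ, hΔ, hV, hK⟩ :=
    quantitative_vip_solution_general hd hne hcl.isComplete hcv hbd hT hτ0 hτ1 hG hf hε
  exact ⟨u, φ, hΔ Δ hmaj, hV t ht (V u φ), hK⟩
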